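/- Let x ≥ 3.5 be a half-integer (x = m + 1/2 for some positive integer m) and let C = 1284699552/444215525. Then ∑_{p prime, x/2 < p < 3x/2} 1/|x − p| ≤ 2C + 4·log(log x). -/

import Mathlib

/-!
Partial summation over the distance from `x = m + 1 / 2` to `p` turns the sum over primes into
`∑ A(k) / (k ^ 2 - 1 / 4)` plus a boundary term, where `A(k)` counts the primes among the `2 * k`
integers nearest to `x`. For small `k` it is enough that primes are `±1` modulo `6`. For large `k`,
Selberg's sieve with `log z = (L - √L) / 2` gives the Brun–Titchmarsh bound
`A(k) ≤ 4 * k / (L - 3 / 2 * √L)`, where `L = log (2 * k)`. As `L` increases by about `1 / k` from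
one `k` to the next, the sum then behaves like `∫ 4 / (L - 3 / 2 * √L) dL = 8 log (√L - 3 / 2)`,
which is below `4 log L = 4 log log (2 * k)`; the case of small `k` absorbs into the constant.
-/

section

open Finset ArithmeticFunction UniqueFactorizationMonoid
open scoped ArithmeticFunction.Moebius

theorem sum_moebius_div_filter_dvd {k : ℕ} (hk : k ≠ 0) (l : ℕ) :
    ∑ d ∈ k.divisors with l ∣ d, μ (k / d) = if k = l then 1 else 0 := by
  by_cases hlk : l ∣ k
  · obtain ⟨m, rfl⟩ := hlk
    have hl : 0 < l := Nat.pos_of_ne_zero (left_ne_zero_of_mul hk)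
    have hm : m ≠ 0 := right_ne_zero_of_mul hk
    have himage : {d ∈ (l * m).divisors | l ∣ d} = m.divisors.image (l * ·) := by
      ext d
      simp only [mem_filter, Nat.mem_divisors, mem_image]
      constructor
      · rintro ⟨⟨hd, -⟩, e, rfl⟩
        exact ⟨e, ⟨Nat.dvd_of_mul_dvd_mul_left hl hd, hm⟩, rfl⟩
      · rintro ⟨e, ⟨he, -⟩, rfl⟩
        exact ⟨⟨mul_dvd_mul_left l he, hk⟩, dvd_mul_right l e⟩
    rw [himage, sum_image fun a _ b _ h => Nat.eq_of_mul_eq_mul_left hl h]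
    simp only [Nat.mul_div_mul_left _ _ hl]
    rw [Nat.sum_div_divisors m μ, ← coe_mul_zeta_apply, moebius_mul_coe_zeta, one_apply]
    simp [hl.ne']
  · rw [filter_false_of_mem fun d hd h => hlk (h.trans (Nat.dvd_of_mem_divisors hd)), sum_empty,
      if_neg (fun h => hlk h.symm.dvd)]

theorem sum_filter_dvd_sum_moebius_div_mul {R : Type*} [CommRing R] {n : ℕ} {D : Finset ℕ}
    (hD : D ⊆ n.divisors) (f : ℕ → R) (l : ℕ) :
    ∑ d ∈ n.divisors with l ∣ d, ∑ k ∈ D with d ∣ k, (μ (k / d) : R) * f k =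
      if l ∈ D then f l else 0 := by
  have hinner : ∀ k ∈ D, ∑ d ∈ n.divisors with l ∣ d ∧ d ∣ k, (μ (k / d) : R) * f k =
      if k = l then f k else 0 := by
    intro k hk
    obtain ⟨hkn, hn⟩ := Nat.mem_divisors.mp (hD hk)
    have hfilter : {d ∈ n.divisors | l ∣ d ∧ d ∣ k} = {d ∈ k.divisors | l ∣ d} := by
      rw [← Nat.divisors_filter_dvd_of_dvd hn hkn, filter_filter]
      exact filter_congr fun _ _ => and_comm
    rw [hfilter, ← sum_mul, ← Int.cast_sum,
      sum_moebius_div_filter_dvd (ne_zero_of_dvd_ne_zero hn hkn)]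
    split_ifs <;> simp
  calc ∑ d ∈ n.divisors with l ∣ d, ∑ k ∈ D with d ∣ k, (μ (k / d) : R) * f k
      = ∑ k ∈ D, ∑ d ∈ n.divisors with l ∣ d ∧ d ∣ k, (μ (k / d) : R) * f k :=
        sum_comm' fun d k => by simp only [mem_filter]; tauto
    _ = ∑ k ∈ D, if k = l then f k else 0 := sum_congr rfl hinner
    _ = if l ∈ D then f l else 0 := sum_ite_eq' D l f

section

variable (s : SelbergSieve)

/-- The divisors of the sifting modulus up to the square root of the level: they carry the weights
of Selberg's `Λ²` sieve. -/
noncomputable def selbergDivisors : Finset ℕ :=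
  {d ∈ s.prodPrimes.divisors | (d : ℝ) ^ 2 ≤ s.level}

/-- The quantity `S = ∑ g(l)` over `selbergDivisors`, where `g` is `BoundingSieve.selbergTerms`;
the main term of Selberg's sieve is the total mass divided by `S`. -/
noncomputable def selbergSum : ℝ := ∑ l ∈ selbergDivisors s, s.selbergTerms l

/-- Selberg's weights: among the weights on `selbergDivisors` with value `1` at `1`, they minimise
the main term of the `Λ²` sieve. -/
noncomputable def selbergWeight (d : ℕ) : ℝ :=
  (s.nu d)⁻¹ * ∑ k ∈ selbergDivisors s with d ∣ k,
    (μ (k / d) : ℝ) * (μ k * s.selbergTerms k / selbergSum s)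

variable {s}

theorem mem_selbergDivisors {d : ℕ} :
    d ∈ selbergDivisors s ↔ d ∣ s.prodPrimes ∧ (d : ℝ) ^ 2 ≤ s.level := by
  simp [selbergDivisors, BoundingSieve.prodPrimes_ne_zero]

theorem selbergDivisors_subset_divisors : selbergDivisors s ⊆ s.prodPrimes.divisors :=
  filter_subset _ _

theorem mem_selbergDivisors_of_dvd {d k : ℕ} (hk : k ∈ selbergDivisors s) (hdk : d ∣ k) :
    d ∈ selbergDivisors s := by
  rw [mem_selbergDivisors] at hk ⊢
  have hk0 : 0 < k := Nat.pos_of_dvd_of_pos hk.1 (Nat.pos_of_ne_zero s.prodPrimes_ne_zero)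
  have hle : (d : ℝ) ≤ k := by exact_mod_cast Nat.le_of_dvd hk0 hdk
  exact ⟨hdk.trans hk.1, le_trans (by gcongr) hk.2⟩

theorem one_mem_selbergDivisors : 1 ∈ selbergDivisors s :=
  mem_selbergDivisors.mpr ⟨one_dvd _, by simpa using s.one_le_level⟩

theorem selbergTerms_pos_of_mem {l : ℕ} (hl : l ∈ selbergDivisors s) : 0 < s.selbergTerms l :=
  BoundingSieve.selbergTerms_pos (mem_selbergDivisors.mp hl).1

theorem selbergSum_pos : 0 < selbergSum s :=
  sum_pos (fun _ hl => selbergTerms_pos_of_mem hl) ⟨1, one_mem_selbergDivisors⟩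

theorem moebius_sq_of_mem_selbergDivisors {l : ℕ} (hl : l ∈ selbergDivisors s) :
    (μ l : ℝ) ^ 2 = 1 := by
  exact_mod_cast moebius_sq_eq_one_of_squarefree
    (s.squarefree_of_dvd_prodPrimes (mem_selbergDivisors.mp hl).1)

theorem selbergWeight_one : selbergWeight s 1 = 1 := by
  have hterm : ∀ k ∈ selbergDivisors s,
      (μ k : ℝ) * (μ k * s.selbergTerms k / selbergSum s) = s.selbergTerms k / selbergSum s := by
    intro k hk
    rw [← mul_div_assoc, ← mul_assoc, ← sq, moebius_sq_of_mem_selbergDivisors hk, one_mul]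
  simp only [selbergWeight, s.nu_mult.map_one, inv_one, one_mul, one_dvd, filter_true, Nat.div_one]
  rw [sum_congr rfl hterm, ← sum_div, ← selbergSum, div_self selbergSum_pos.ne']

theorem selbergWeight_eq_zero {d : ℕ} (hd : d ∉ selbergDivisors s) : selbergWeight s d = 0 := by
  rw [selbergWeight, filter_false_of_mem fun k hk hdk => hd (mem_selbergDivisors_of_dvd hk hdk),
    sum_empty, mul_zero]

theorem sum_nu_mul_selbergWeight (l : ℕ) :
    ∑ d ∈ s.prodPrimes.divisors with l ∣ d, s.nu d * selbergWeight s d =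
      if l ∈ selbergDivisors s then μ l * s.selbergTerms l / selbergSum s else 0 := by
  rw [← sum_filter_dvd_sum_moebius_div_mul selbergDivisors_subset_divisors
    fun k => (μ k : ℝ) * s.selbergTerms k / selbergSum s]
  refine sum_congr rfl fun d hd => ?_
  have hν : s.nu d ≠ 0 := s.nu_ne_zero (Nat.dvd_of_mem_divisors (mem_filter.mp hd).1)
  rw [selbergWeight, mul_inv_cancel_left₀ hν]

theorem mainSum_lambdaSquared_selbergWeight :
    s.mainSum (BoundingSieve.lambdaSquared (selbergWeight s)) = 1 / selbergSum s := by
  have hterm : ∀ l ∈ selbergDivisors s,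
      (s.selbergTerms l)⁻¹ * (μ l * s.selbergTerms l / selbergSum s) ^ 2 =
        s.selbergTerms l / selbergSum s ^ 2 := by
    intro l hl
    have hg := (selbergTerms_pos_of_mem hl).ne'
    rw [div_pow, mul_pow, moebius_sq_of_mem_selbergDivisors hl]
    field_simp
  have hS : selbergSum s ≠ 0 := selbergSum_pos.ne'
  simp only [BoundingSieve.mainSum_lambdaSquared_eq_sum_mul_sum_sq, ← sum_filter,
    sum_nu_mul_selbergWeight, ite_pow, mul_ite, ne_eq, OfNat.ofNat_ne_zero, not_false_eq_true,
    zero_pow, mul_zero, filter_mem_eq_inter]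
  rw [inter_eq_right.mpr selbergDivisors_subset_divisors, sum_congr rfl hterm,
    ← sum_div, ← selbergSum]
  field_simp

theorem coprime_div_of_mem_selbergDivisors {d k : ℕ} (hk : k ∈ selbergDivisors s) (hdk : d ∣ k) :
    d.Coprime (k / d) := by
  apply Nat.coprime_of_squarefree_mul
  rw [Nat.mul_div_cancel' hdk]
  exact s.squarefree_of_dvd_prodPrimes (mem_selbergDivisors.mp hk).1

theorem selbergTerms_mul_sum_selbergTerms_div_le {d l : ℕ} (hld : l ∣ d) (hl : l ≠ 0) :
    s.selbergTerms l * ∑ k ∈ selbergDivisors s with d ∣ k, s.selbergTerms (k / d) ≤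
      ∑ n ∈ selbergDivisors s with n.gcd d = l, s.selbergTerms n := by
  have hinj : Set.InjOn (fun k => l * (k / d)) ↑{k ∈ selbergDivisors s | d ∣ k} := by
    intro k hk k' hk' h
    rw [← Nat.mul_div_cancel' (mem_filter.mp hk).2,
      Nat.eq_of_mul_eq_mul_left (Nat.pos_of_ne_zero hl) h,
      Nat.mul_div_cancel' (mem_filter.mp hk').2]
  have hmaps : {k ∈ selbergDivisors s | d ∣ k}.image (fun k => l * (k / d)) ⊆
      {n ∈ selbergDivisors s | n.gcd d = l} := by
    refine image_subset_iff.mpr fun k hk => mem_filter.mpr ?_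
    obtain ⟨hk, hdk⟩ := mem_filter.mp hk
    refine ⟨mem_selbergDivisors_of_dvd hk
      ((mul_dvd_mul_right hld _).trans (Nat.mul_div_cancel' hdk).dvd), ?_⟩
    rw [(coprime_div_of_mem_selbergDivisors hk hdk).symm.gcd_mul_right_cancel,
      Nat.gcd_eq_left hld]
  calc s.selbergTerms l * ∑ k ∈ selbergDivisors s with d ∣ k, s.selbergTerms (k / d)
      = ∑ k ∈ selbergDivisors s with d ∣ k, s.selbergTerms (l * (k / d)) := by
        rw [mul_sum]
        refine sum_congr rfl fun k hk => ?_
        obtain ⟨hk, hdk⟩ := mem_filter.mp hk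
        exact (s.selbergTerms_isMultiplicative.map_mul_of_coprime
          ((coprime_div_of_mem_selbergDivisors hk hdk).coprime_dvd_left hld)).symm
    _ = ∑ n ∈ {k ∈ selbergDivisors s | d ∣ k}.image fun k => l * (k / d), s.selbergTerms n :=
        (sum_image hinj).symm
    _ ≤ ∑ n ∈ selbergDivisors s with n.gcd d = l, s.selbergTerms n :=
        sum_le_sum_of_subset_of_nonneg hmaps fun n hn _ =>
          (selbergTerms_pos_of_mem (mem_filter.mp hn).1).le

theorem inv_nu_mul_sum_selbergTerms_le {d : ℕ} (hd : d ∣ s.prodPrimes) :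
    (s.nu d)⁻¹ * ∑ k ∈ selbergDivisors s with d ∣ k, s.selbergTerms k ≤ selbergSum s := by
  have hfactor : ∑ k ∈ selbergDivisors s with d ∣ k, s.selbergTerms k =
      s.selbergTerms d * ∑ k ∈ selbergDivisors s with d ∣ k, s.selbergTerms (k / d) := by
    rw [mul_sum]
    refine sum_congr rfl fun k hk => ?_
    obtain ⟨hk, hdk⟩ := mem_filter.mp hk
    rw [← s.selbergTerms_isMultiplicative.map_mul_of_coprime
      (coprime_div_of_mem_selbergDivisors hk hdk), Nat.mul_div_cancel' hdk]
  have hgcd : ∀ n ∈ selbergDivisors s, n.gcd d ∈ {l ∈ s.prodPrimes.divisors | l ∣ d} :=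
    fun n _ => mem_filter.mpr ⟨Nat.mem_divisors.mpr
      ⟨(n.gcd_dvd_right d).trans hd, s.prodPrimes_ne_zero⟩, n.gcd_dvd_right d⟩
  calc (s.nu d)⁻¹ * ∑ k ∈ selbergDivisors s with d ∣ k, s.selbergTerms k
      = ∑ l ∈ s.prodPrimes.divisors with l ∣ d,
          s.selbergTerms l * ∑ k ∈ selbergDivisors s with d ∣ k, s.selbergTerms (k / d) := by
        rw [hfactor, ← sum_mul, sum_filter _ s.selbergTerms,
          s.sum_divisors_selbergTerms_eq_selbergTerms_mul_nu_inv hd]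
        ring
    _ ≤ ∑ l ∈ s.prodPrimes.divisors with l ∣ d,
          ∑ n ∈ selbergDivisors s with n.gcd d = l, s.selbergTerms n :=
        sum_le_sum fun l hl => selbergTerms_mul_sum_selbergTerms_div_le (mem_filter.mp hl).2
          (Nat.pos_of_mem_divisors (mem_filter.mp hl).1).ne'
    _ = selbergSum s := sum_fiberwise_of_maps_to hgcd _

theorem abs_selbergWeight_le_one (d : ℕ) : |selbergWeight s d| ≤ 1 := by
  by_cases hd : d ∈ selbergDivisors s
  swap
  · simp [selbergWeight_eq_zero hd]
  have hdP := (mem_selbergDivisors.mp hd).1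
  have hS := selbergSum_pos (s := s)
  have hμ : ∀ n : ℕ, |(μ n : ℝ)| ≤ 1 := fun n => by exact_mod_cast abs_moebius_le_one
  have hterm : ∀ k ∈ selbergDivisors s,
      |(μ (k / d) : ℝ) * (μ k * s.selbergTerms k / selbergSum s)| ≤
        s.selbergTerms k / selbergSum s := by
    intro k hk
    have hg := selbergTerms_pos_of_mem hk
    calc |(μ (k / d) : ℝ) * (μ k * s.selbergTerms k / selbergSum s)|
        = |(μ (k / d) : ℝ)| * (|(μ k : ℝ)| * s.selbergTerms k / selbergSum s) := by
          rw [abs_mul, abs_div, abs_mul, abs_of_pos hg, abs_of_pos hS]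
      _ ≤ 1 * (1 * s.selbergTerms k / selbergSum s) := by gcongr <;> exact hμ _
      _ = s.selbergTerms k / selbergSum s := by ring
  calc |selbergWeight s d|
      ≤ (s.nu d)⁻¹ * ∑ k ∈ selbergDivisors s with d ∣ k, s.selbergTerms k / selbergSum s := by
        have hν := s.nu_pos_of_dvd_prodPrimes hdP
        rw [selbergWeight, abs_mul, abs_of_pos (inv_pos.mpr hν)]
        gcongr
        exact (abs_sum_le_sum_abs _ _).trans
          (sum_le_sum fun k hk => hterm k (mem_filter.mp hk).1)
    _ = ((s.nu d)⁻¹ * ∑ k ∈ selbergDivisors s with d ∣ k, s.selbergTerms k) / selbergSum s := by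
        rw [← sum_div, mul_div_assoc]
    _ ≤ 1 := (div_le_one hS).mpr (inv_nu_mul_sum_selbergTerms_le hdP)

theorem abs_lambdaSquared_selbergWeight_le (d : ℕ) :
    |BoundingSieve.lambdaSquared (selbergWeight s) d| ≤
      ∑ d₁ ∈ selbergDivisors s, ∑ d₂ ∈ selbergDivisors s, if d = d₁.lcm d₂ then 1 else 0 := by
  set D := selbergDivisors s
  set F : ℕ × ℕ → ℝ := fun q =>
    if d = q.1.lcm q.2 then selbergWeight s q.1 * selbergWeight s q.2 else 0 with hF
  have hsupport : ∀ q, F q ≠ 0 → q ∈ D ×ˢ D := by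
    intro q hq
    rw [mem_product]
    by_contra h
    rcases not_and_or.mp h with h | h <;> exact hq (by simp [hF, selbergWeight_eq_zero h])
  have hle : ∀ q, |F q| ≤ if d = q.1.lcm q.2 then 1 else 0 := by
    intro q
    simp only [hF]
    split_ifs
    · rw [abs_mul]
      exact mul_le_one₀ (abs_selbergWeight_le_one _) (abs_nonneg _) (abs_selbergWeight_le_one _)
    · simp
  calc |BoundingSieve.lambdaSquared (selbergWeight s) d|
      = |∑ q ∈ d.divisors ×ˢ d.divisors with q ∈ D ×ˢ D, F q| := by
        rw [sum_filter_of_ne fun q _ hq => hsupport q hq, sum_product]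
        rfl
    _ ≤ ∑ q ∈ d.divisors ×ˢ d.divisors with q ∈ D ×ˢ D, if d = q.1.lcm q.2 then (1 : ℝ) else 0 :=
        (abs_sum_le_sum_abs _ _).trans (sum_le_sum fun q _ => hle q)
    _ ≤ ∑ q ∈ D ×ˢ D, if d = q.1.lcm q.2 then (1 : ℝ) else 0 :=
        sum_le_sum_of_subset_of_nonneg (fun q hq => (mem_filter.mp hq).2) fun q _ _ => by
          split_ifs <;> norm_num
    _ = ∑ d₁ ∈ D, ∑ d₂ ∈ D, if d = d₁.lcm d₂ then (1 : ℝ) else 0 := sum_product _ _ _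

theorem errSum_lambdaSquared_selbergWeight_le :
    s.errSum (BoundingSieve.lambdaSquared (selbergWeight s)) ≤
      ∑ d₁ ∈ selbergDivisors s, ∑ d₂ ∈ selbergDivisors s, |s.rem (d₁.lcm d₂)| := by
  have hlcm : ∀ d₁ ∈ selbergDivisors s, ∀ d₂ ∈ selbergDivisors s,
      d₁.lcm d₂ ∈ s.prodPrimes.divisors := fun d₁ h₁ d₂ h₂ =>
    Nat.mem_divisors.mpr ⟨Nat.lcm_dvd (mem_selbergDivisors.mp h₁).1 (mem_selbergDivisors.mp h₂).1,
      s.prodPrimes_ne_zero⟩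
  calc s.errSum (BoundingSieve.lambdaSquared (selbergWeight s))
      ≤ ∑ d ∈ s.prodPrimes.divisors, ∑ d₁ ∈ selbergDivisors s, ∑ d₂ ∈ selbergDivisors s,
          if d = d₁.lcm d₂ then |s.rem d| else 0 := by
        refine sum_le_sum fun d _ => ?_
        grw [abs_lambdaSquared_selbergWeight_le d]
        simp only [sum_mul, ite_mul, one_mul, zero_mul, le_refl]
    _ = ∑ d₁ ∈ selbergDivisors s, ∑ d₂ ∈ selbergDivisors s, ∑ d ∈ s.prodPrimes.divisors,
          if d = d₁.lcm d₂ then |s.rem d| else 0 := by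
        rw [sum_comm]
        exact sum_congr rfl fun _ _ => sum_comm
    _ = ∑ d₁ ∈ selbergDivisors s, ∑ d₂ ∈ selbergDivisors s, |s.rem (d₁.lcm d₂)| :=
        sum_congr rfl fun d₁ h₁ => sum_congr rfl fun d₂ h₂ => by
          rw [sum_ite_eq_of_mem' _ _ _ (hlcm d₁ h₁ d₂ h₂)]

theorem siftedSum_le_totalMass_div_selbergSum_add :
    s.siftedSum ≤ s.totalMass / selbergSum s +
      ∑ d₁ ∈ selbergDivisors s, ∑ d₂ ∈ selbergDivisors s, |s.rem (d₁.lcm d₂)| := by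
  grw [s.siftedSum_le_mainSum_errSum_of_upperMoebius _
    (BoundingSieve.upperMoebius_lambdaSquared _ selbergWeight_one),
    mainSum_lambdaSquared_selbergWeight, errSum_lambdaSquared_selbergWeight_le, mul_one_div]

end

theorem inv_totient_eq_inv_mul_prod (n : ℕ) :
    (n.totient : ℝ)⁻¹ = (n : ℝ)⁻¹ * ∏ p ∈ n.primeFactors, (1 - (p : ℝ)⁻¹)⁻¹ := by
  have htotient : (n.totient : ℝ) = n * ∏ p ∈ n.primeFactors, (1 - (p : ℝ)⁻¹) := by
    simpa using congrArg (Rat.cast : ℚ → ℝ) (Nat.totient_eq_mul_prod_factors n)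
  rw [htotient, mul_inv, prod_inv_distrib]

theorem sum_inv_le_prod_inv_one_sub_inv {S F : Finset ℕ} (hS : ∀ p ∈ S, p.Prime)
    (hF : ∀ k ∈ F, k ∈ Nat.factoredNumbers S) :
    ∑ k ∈ F, (k : ℝ)⁻¹ ≤ ∏ p ∈ S, (1 - (p : ℝ)⁻¹)⁻¹ := by
  let f : ℕ →* ℝ :=
    { toFun := fun n => (n : ℝ)⁻¹
      map_one' := by simp
      map_mul' := by simp [mul_comm] }
  have hf : ∀ {p : ℕ}, p.Prime → ‖f p‖ < 1 := fun {p} hp => by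
    simpa [f] using inv_lt_one_of_one_lt₀ (Nat.one_lt_cast (α := ℝ).mpr hp.one_lt)
  have hsum := (EulerProduct.summable_and_hasSum_factoredNumbers_prod_filter_prime_geometric
    hf S).2
  rw [filter_true_of_mem hS] at hsum
  calc ∑ k ∈ F, (k : ℝ)⁻¹
      = ∑ k ∈ F, (Nat.factoredNumbers S).indicator f k :=
        sum_congr rfl fun k hk => (Set.indicator_of_mem (hF k hk) f).symm
    _ ≤ ∏ p ∈ S, (1 - (p : ℝ)⁻¹)⁻¹ :=
        sum_le_hasSum F (fun k _ => Set.indicator_nonneg (fun j _ => by simp [f]) k)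
          (hasSum_subtype_iff_indicator.mp hsum)

theorem sum_inv_le_inv_totient {r : ℕ} {F : Finset ℕ} (hr : Squarefree r)
    (hF : ∀ n ∈ F, n ≠ 0 ∧ n.primeFactors = r.primeFactors) :
    ∑ n ∈ F, (n : ℝ)⁻¹ ≤ (r.totient : ℝ)⁻¹ := by
  have hdvd : ∀ n ∈ F, r ∣ n := fun n hn => by
    rw [← Nat.prod_primeFactors_of_squarefree hr, ← (hF n hn).2]
    exact Nat.prod_primeFactors_dvd n
  have hinj : Set.InjOn (· / r) (F : Set ℕ) := fun m hm n hn h => by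
    rw [← Nat.mul_div_cancel' (hdvd m hm), show m / r = n / r from h,
      Nat.mul_div_cancel' (hdvd n hn)]
  have hfactored : ∀ k ∈ F.image (· / r), k ∈ Nat.factoredNumbers r.primeFactors := by
    intro k hk
    obtain ⟨n, hn, rfl⟩ := mem_image.mp hk
    have hk0 : n / r ≠ 0 := (Nat.div_pos (Nat.le_of_dvd (Nat.pos_of_ne_zero (hF n hn).1)
      (hdvd n hn)) (Nat.pos_of_ne_zero hr.ne_zero)).ne'
    refine Nat.mem_factoredNumbers_of_primeFactors_subset hk0 ?_
    rw [← (hF n hn).2]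
    exact Nat.primeFactors_mono (Nat.div_dvd_of_dvd (hdvd n hn)) (hF n hn).1
  calc ∑ n ∈ F, (n : ℝ)⁻¹
      = (r : ℝ)⁻¹ * ∑ k ∈ F.image (· / r), (k : ℝ)⁻¹ := by
        rw [sum_image hinj, mul_sum]
        refine sum_congr rfl fun n hn => ?_
        rw [← mul_inv, ← Nat.cast_mul, Nat.mul_div_cancel' (hdvd n hn)]
    _ ≤ (r : ℝ)⁻¹ * ∏ p ∈ r.primeFactors, (1 - (p : ℝ)⁻¹)⁻¹ := by
        gcongr
        exact sum_inv_le_prod_inv_one_sub_inv (fun _ => Nat.prime_of_mem_primeFactors) hfactored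
    _ = (r.totient : ℝ)⁻¹ := (inv_totient_eq_inv_mul_prod r).symm

theorem harmonic_le_sum_inv_totient (Q : ℕ) :
    (harmonic Q : ℝ) ≤ ∑ l ∈ Icc 1 Q with Squarefree l, (l.totient : ℝ)⁻¹ := by
  have hradical : ∀ n ∈ Icc 1 Q, radical n ∈ {l ∈ Icc 1 Q | Squarefree l} := fun n hn => by
    obtain ⟨h1, hQ⟩ := mem_Icc.mp hn
    have hle := Nat.le_of_dvd h1 (radical_dvd_self (a := n))
    exact mem_filter.mpr ⟨mem_Icc.mpr ⟨Nat.radical_pos n, hle.trans hQ⟩, squarefree_radical⟩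
  calc (harmonic Q : ℝ)
      = ∑ n ∈ Icc 1 Q, (n : ℝ)⁻¹ := by simp [harmonic_eq_sum_Icc]
    _ = ∑ l ∈ Icc 1 Q with Squarefree l, ∑ n ∈ Icc 1 Q with radical n = l, (n : ℝ)⁻¹ :=
        (sum_fiberwise_of_maps_to hradical _).symm
    _ ≤ ∑ l ∈ Icc 1 Q with Squarefree l, (l.totient : ℝ)⁻¹ :=
        sum_le_sum fun l hl => sum_inv_le_inv_totient (mem_filter.mp hl).2 fun n hn => by
          obtain ⟨hnQ, rfl⟩ := mem_filter.mp hn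
          exact ⟨Nat.one_le_iff_ne_zero.mp (mem_Icc.mp hnQ).1, (Nat.primeFactors_radical n).symm⟩

theorem abs_card_filter_dvd_sub_le_one (a N : ℕ) {d : ℕ} (hd : 0 < d) :
    |(#{n ∈ Ioc a (a + N) | d ∣ n} : ℝ) - N / d| ≤ 1 := by
  have hcard : (#{n ∈ Ioc a (a + N) | d ∣ n} : ℤ) =
      max (⌊((a + N : ℕ) / d : ℚ)⌋ - ⌊(a / d : ℚ)⌋) 0 := by
    simpa [Nat.modEq_zero_iff_dvd] using Nat.Ioc_filter_modEq_card a (a + N) hd 0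
  have hmono : ⌊(a / d : ℚ)⌋ ≤ ⌊((a + N : ℕ) / d : ℚ)⌋ := by
    gcongr
    omega
  rw [max_eq_left (sub_nonneg.mpr hmono)] at hcard
  have hsplit : ((a + N : ℕ) / d : ℚ) = a / d + N / d := by push_cast; ring
  have hrat : |(#{n ∈ Ioc a (a + N) | d ∣ n} : ℚ) - N / d| ≤ 1 := by
    have hcast : (#{n ∈ Ioc a (a + N) | d ∣ n} : ℚ) =
        ⌊((a + N : ℕ) / d : ℚ)⌋ - ⌊(a / d : ℚ)⌋ := by exact_mod_cast hcard
    rw [hcast, abs_le]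
    constructor <;> linarith [Int.floor_le (a / d : ℚ), Int.lt_floor_add_one (a / d : ℚ),
      Int.floor_le ((a + N : ℕ) / d : ℚ), Int.lt_floor_add_one ((a + N : ℕ) / d : ℚ)]
  simpa using (Rat.cast_le (K := ℝ)).mpr hrat

/-- The sieve that removes the multiples of the primes up to `Q` from the integers in
`(a, a + N]`, at the level `Q ^ 2` for which the sieve weights live on `[1, Q]`. -/
noncomputable def intervalSieve (a N : ℕ) {Q : ℕ} (hQ : 1 ≤ Q) : SelbergSieve where
  support := Ioc a (a + N)
  prodPrimes := primorial Q
  prodPrimes_squarefree := squarefree_primorial Q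
  weights _ := 1
  weights_nonneg _ := zero_le_one
  totalMass := N
  nu := ⟨fun n => (n : ℝ)⁻¹, by simp⟩
  nu_mult := IsMultiplicative.iff_ne_zero.mpr ⟨by simp, fun _ _ _ => by simp [mul_comm]⟩
  nu_pos_of_prime p hp _ := by simpa using hp.pos
  nu_lt_one_of_prime p hp _ := by
    simpa using inv_lt_one_of_one_lt₀ (Nat.one_lt_cast (α := ℝ).mpr hp.one_lt)
  level := Q ^ 2
  one_le_level := by exact_mod_cast Nat.one_le_pow _ _ hQ

section

variable (a N : ℕ) {Q : ℕ} (hQ : 1 ≤ Q)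

theorem selbergTerms_intervalSieve (l : ℕ) :
    (intervalSieve a N hQ).selbergTerms l = (l.totient : ℝ)⁻¹ := by
  rw [BoundingSieve.selbergTerms_apply, inv_totient_eq_inv_mul_prod]
  rfl

theorem selbergDivisors_intervalSieve :
    selbergDivisors (intervalSieve a N hQ) = {l ∈ Icc 1 Q | Squarefree l} := by
  ext l
  have hlevel : (l : ℝ) ^ 2 ≤ (intervalSieve a N hQ).level ↔ l ≤ Q := by
    change (l : ℝ) ^ 2 ≤ (Q : ℝ) ^ 2 ↔ l ≤ Q
    rw [sq_le_sq₀ l.cast_nonneg Q.cast_nonneg, Nat.cast_le]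
  rw [mem_selbergDivisors, hlevel, mem_filter, mem_Icc]
  constructor
  · rintro ⟨hdvd, hle⟩
    have hl := (squarefree_primorial Q).squarefree_of_dvd hdvd
    exact ⟨⟨Nat.one_le_iff_ne_zero.mpr hl.ne_zero, hle⟩, hl⟩
  · rintro ⟨⟨-, hle⟩, hl⟩
    exact ⟨hl.dvd_primorial.trans (primorial_dvd_primorial hle), hle⟩

theorem harmonic_le_selbergSum_intervalSieve :
    (harmonic Q : ℝ) ≤ selbergSum (intervalSieve a N hQ) := by
  rw [selbergSum, selbergDivisors_intervalSieve]
  refine (harmonic_le_sum_inv_totient Q).trans_eq (sum_congr rfl fun l _ => ?_)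
  exact (selbergTerms_intervalSieve a N hQ l).symm

theorem abs_rem_intervalSieve_le_one {d : ℕ} (hd : 0 < d) :
    |(intervalSieve a N hQ).rem d| ≤ 1 := by
  have hrem : (intervalSieve a N hQ).rem d = #{n ∈ Ioc a (a + N) | d ∣ n} - N / d := by
    rw [div_eq_inv_mul, card_filter]
    push_cast
    rfl
  rw [hrem]
  exact abs_card_filter_dvd_sub_le_one a N hd

theorem sum_abs_rem_intervalSieve_le :
    ∑ d₁ ∈ selbergDivisors (intervalSieve a N hQ), ∑ d₂ ∈ selbergDivisors (intervalSieve a N hQ),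
      |(intervalSieve a N hQ).rem (d₁.lcm d₂)| ≤ (Q : ℝ) ^ 2 := by
  set D := selbergDivisors (intervalSieve a N hQ) with hD
  have hpos : ∀ d ∈ D, 0 < d := fun d hd => by
    rw [hD, selbergDivisors_intervalSieve, mem_filter, mem_Icc] at hd
    exact hd.1.1
  have hcard : #D ≤ Q := by
    rw [hD, selbergDivisors_intervalSieve]
    exact (card_filter_le _ _).trans_eq (by simp)
  calc ∑ d₁ ∈ D, ∑ d₂ ∈ D, |(intervalSieve a N hQ).rem (d₁.lcm d₂)|
      ≤ ∑ _ ∈ D, ∑ _ ∈ D, (1 : ℝ) := sum_le_sum fun _ h₁ => sum_le_sum fun _ h₂ =>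
        abs_rem_intervalSieve_le_one a N hQ (Nat.lcm_pos (hpos _ h₁) (hpos _ h₂))
    _ = (#D : ℝ) ^ 2 := by simp [sq]
    _ ≤ (Q : ℝ) ^ 2 := by gcongr

theorem card_primes_Ioc_le_siftedSum_add :
    (#{p ∈ Ioc a (a + N) | p.Prime} : ℝ) ≤ (intervalSieve a N hQ).siftedSum + Q := by
  have hsifted : (intervalSieve a N hQ).siftedSum =
      #{n ∈ Ioc a (a + N) | (primorial Q).Coprime n} := by
    rw [card_filter]
    push_cast
    rfl
  have hsubset : {p ∈ Ioc a (a + N) | p.Prime} ⊆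
      {n ∈ Ioc a (a + N) | (primorial Q).Coprime n} ∪ Icc 1 Q := by
    intro p hp
    obtain ⟨hp, hprime⟩ := mem_filter.mp hp
    rw [mem_union, mem_filter, mem_Icc]
    by_cases hpQ : p ≤ Q
    · exact Or.inr ⟨hprime.one_lt.le, hpQ⟩
    · exact Or.inl ⟨hp, ((hprime.coprime_iff_not_dvd).mpr
        fun h => hpQ (hprime.dvd_primorial_iff.mp h)).symm⟩
  have hcard := (card_le_card hsubset).trans (card_union_le _ _)
  rw [Nat.card_Icc, Nat.add_sub_cancel] at hcard
  rw [hsifted]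
  exact_mod_cast hcard

end

theorem card_primes_Ioc_le (a N : ℕ) {z : ℝ} (hz : 1 < z) :
    (#{p ∈ Ioc a (a + N) | p.Prime} : ℝ) ≤ N / Real.log z + z ^ 2 + z := by
  have hQ : 1 ≤ ⌊z⌋₊ := (Nat.one_le_floor_iff z).mpr hz.le
  have hfloor : (⌊z⌋₊ : ℝ) ≤ z := Nat.floor_le (by positivity)
  have hlog : 0 < Real.log z := Real.log_pos hz
  have hS : Real.log z ≤ selbergSum (intervalSieve a N hQ) :=
    (log_le_harmonic_floor z (by positivity)).trans
      (harmonic_le_selbergSum_intervalSieve a N hQ)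
  calc (#{p ∈ Ioc a (a + N) | p.Prime} : ℝ)
      ≤ (intervalSieve a N hQ).siftedSum + ⌊z⌋₊ := card_primes_Ioc_le_siftedSum_add a N hQ
    _ ≤ N / selbergSum (intervalSieve a N hQ) + (⌊z⌋₊ : ℝ) ^ 2 + ⌊z⌋₊ := by
        grw [siftedSum_le_totalMass_div_selbergSum_add, sum_abs_rem_intervalSieve_le]
        rfl
    _ ≤ N / Real.log z + z ^ 2 + z := by gcongr

theorem exp_neg_add_exp_neg_sq_le {s : ℝ} (hs : 3 ≤ s) :
    Real.exp (-s) + Real.exp (-s) ^ 2 ≤ 1 / (s * (s - 1) * (s - 3 / 2)) := by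
  set u := s * (s - 1) * (s - 3 / 2) with hu
  have hu0 : 0 < u := mul_pos (mul_pos (by linarith) (by linarith)) (by linarith)
  have htaylor : u + 1 ≤ Real.exp s := by
    have h := Real.sum_le_exp_of_nonneg (by linarith : 0 ≤ s) 6
    norm_num [sum_range_succ, Nat.factorial] at h
    have hquartic : 0 ≤ s ^ 4 / 120 + s ^ 3 / 24 - 5 / 6 * s ^ 2 + 3 * s - 1 / 2 := by
      nlinarith [sq_nonneg (s ^ 2 - 9), mul_nonneg (sub_nonneg.mpr hs) (sq_nonneg (s - 4)),
        sq_nonneg (s - 4), sq_nonneg (s - 3)]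
    rw [hu]
    nlinarith [mul_nonneg (by linarith : 0 ≤ s) hquartic]
  have hexp : Real.exp (-s) ≤ 1 / (u + 1) := by
    rw [Real.exp_neg, ← one_div]
    exact one_div_le_one_div_of_le (by positivity) htaylor
  calc Real.exp (-s) + Real.exp (-s) ^ 2
      ≤ 1 / (u + 1) + (1 / (u + 1)) ^ 2 := by gcongr
    _ = (u + 2) / (u + 1) ^ 2 := by field_simp; ring
    _ ≤ 1 / u := by
      rw [div_le_div_iff₀ (by positivity) hu0]
      nlinarith

theorem card_primes_Ioc_le_of_nine_le_log (a : ℕ) {N : ℕ} (hN : 9 ≤ Real.log N) :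
    (#{p ∈ Ioc a (a + N) | p.Prime} : ℝ) ≤
      2 * N / (Real.log N - 3 / 2 * √(Real.log N)) := by
  set s := √(Real.log N)
  have hs : 3 ≤ s := Real.le_sqrt_of_sq_le (by linarith)
  have hsq : Real.log N = s ^ 2 := (Real.sq_sqrt (by linarith)).symm
  have hN0 : (0 : ℝ) < N := by
    refine Nat.cast_pos.mpr (Nat.pos_of_ne_zero fun h => ?_)
    norm_num [h] at hN
  have hNexp : (N : ℝ) = Real.exp (s ^ 2) := by rw [← hsq, Real.exp_log hN0]
  set z := Real.exp ((s ^ 2 - s) / 2) with hz_def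
  have hz1 : 1 < z := Real.one_lt_exp_iff.mpr (by nlinarith)
  have hz_sq : z ^ 2 = N * Real.exp (-s) := by
    rw [hz_def, hNexp, ← Real.exp_nat_mul, ← Real.exp_add]
    congr 1
    push_cast
    ring
  have hz_le : z ≤ N * Real.exp (-s) ^ 2 := by
    rw [hz_def, hNexp, ← Real.exp_nat_mul, ← Real.exp_add, Real.exp_le_exp]
    push_cast
    nlinarith
  have h1 : s - 1 ≠ 0 := by linarith
  have h2 : 2 * s - 3 ≠ 0 := by linarith
  have h3 : s ≠ 0 := by linarith
  calc (#{p ∈ Ioc a (a + N) | p.Prime} : ℝ)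
      ≤ N / Real.log z + z ^ 2 + z := card_primes_Ioc_le a N hz1
    _ ≤ N / ((s ^ 2 - s) / 2) + N * Real.exp (-s) + N * Real.exp (-s) ^ 2 := by
        rw [hz_sq, Real.log_exp]
        gcongr
    _ = N * (2 / (s * (s - 1)) + (Real.exp (-s) + Real.exp (-s) ^ 2)) := by
        rw [show s ^ 2 - s = s * (s - 1) by ring]
        field_simp
        ring
    _ ≤ N * (2 / (s * (s - 1)) + 1 / (s * (s - 1) * (s - 3 / 2))) := by
        grw [exp_neg_add_exp_neg_sq_le hs]
    _ = 2 * N / (Real.log N - 3 / 2 * s) := by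
        rw [hsq, show s ^ 2 - 3 / 2 * s = s * (s - 3 / 2) by ring]
        field_simp
        ring

theorem card_Ioc_filter_mod_six (a N : ℕ) :
    #{n ∈ Ioc a (a + N) | n % 6 = 1 ∨ n % 6 = 5} + ((a + 5) / 6 + (a + 1) / 6) =
      (a + N + 5) / 6 + (a + N + 1) / 6 := by
  induction N with
  | zero => simp
  | succ N ih =>
    rw [← add_assoc a N 1, ← insert_Ioc_right_eq_Ioc_add_one (by omega), filter_insert]
    split_ifs
    · rw [card_insert_of_notMem (by simp)]
      omega
    · omega

theorem three_mul_card_primes_Ioc_le {a : ℕ} (ha : 3 ≤ a) (k : ℕ) :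
    3 * #{p ∈ Ioc a (a + 2 * k) | p.Prime} ≤ 2 * k + 2 := by
  have hmod : ∀ p, p.Prime → 3 < p → p % 6 = 1 ∨ p % 6 = 5 := by
    intro p hp hp3
    have h2 : ¬2 ∣ p := fun h => by
      have := (Nat.prime_dvd_prime_iff_eq Nat.prime_two hp).mp h
      omega
    have h3 : ¬3 ∣ p := fun h => by
      have := (Nat.prime_dvd_prime_iff_eq Nat.prime_three hp).mp h
      omega
    omega
  have hsubset : {p ∈ Ioc a (a + 2 * k) | p.Prime} ⊆
      {n ∈ Ioc a (a + 2 * k) | n % 6 = 1 ∨ n % 6 = 5} := fun p hp => by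
    obtain ⟨hp, hprime⟩ := mem_filter.mp hp
    exact mem_filter.mpr ⟨hp, hmod p hprime (ha.trans_lt (mem_Ioc.mp hp).1)⟩
  have hcard := card_le_card hsubset
  have hcount := card_Ioc_filter_mod_six a (2 * k)
  omega

/-- The primes at distance less than `k` from `m + 1 / 2`. For `k > m` the lower end is the
truncated difference `0`, which loses no prime. -/
def primesNear (m k : ℕ) : Finset ℕ :=
  {p ∈ Ioc (m - k) (m + k) | p.Prime}

theorem primesNear_subset_succ (m k : ℕ) : primesNear m k ⊆ primesNear m (k + 1) :=
  filter_subset_filter _ (Ioc_subset_Ioc (by omega) (by omega))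

theorem abs_half_integer_sub_of_mem_sdiff {m k p : ℕ}
    (hp : p ∈ primesNear m (k + 1) \ primesNear m k) : |(m + 1 / 2 : ℝ) - p| = k + 1 / 2 := by
  simp only [primesNear, mem_sdiff, mem_filter, mem_Ioc] at hp
  have hend : m = p + k ∨ p = m + k + 1 := by
    obtain ⟨⟨hIoc, hprime⟩, hnot⟩ := hp
    have hnotIoc : ¬(m - k < p ∧ p ≤ m + k) := fun h => hnot ⟨h, hprime⟩
    omega
  have hk : (0 : ℝ) ≤ k := k.cast_nonneg
  rcases hend with rfl | rfl
  · push_cast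
    rw [abs_of_nonneg (by linarith [hk])]
    ring
  · push_cast
    rw [abs_of_nonpos (by linarith [hk])]
    ring

theorem sum_primesNear_succ (m k : ℕ) :
    ∑ p ∈ primesNear m (k + 1), 1 / |(m + 1 / 2 : ℝ) - p| =
      ∑ p ∈ primesNear m k, 1 / |(m + 1 / 2 : ℝ) - p| +
        ((#(primesNear m (k + 1)) : ℝ) - #(primesNear m k)) / (k + 1 / 2) := by
  have hsub := primesNear_subset_succ m k
  have hshell : ∑ p ∈ primesNear m (k + 1) \ primesNear m k, 1 / |(m + 1 / 2 : ℝ) - p| =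
      ((#(primesNear m (k + 1)) : ℝ) - #(primesNear m k)) / (k + 1 / 2) := by
    rw [sum_congr rfl fun p hp => by rw [abs_half_integer_sub_of_mem_sdiff hp], sum_const,
      nsmul_eq_mul, card_sdiff_of_subset hsub, Nat.cast_sub (card_le_card hsub), mul_one_div]
  rw [← sum_sdiff hsub, hshell, add_comm]

theorem one_div_sq_sub_quarter {k : ℝ} (hk : 1 ≤ k) :
    1 / (k ^ 2 - 1 / 4) = 1 / (k - 1 / 2) - 1 / (k + 1 / 2) := by
  rw [div_sub_div _ _ (by linarith) (by linarith)]
  congr 1 <;> ring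

theorem sum_primesNear_eq (m K : ℕ) :
    ∑ p ∈ primesNear m K, 1 / |(m + 1 / 2 : ℝ) - p| =
      #(primesNear m K) / (K - 1 / 2 : ℝ) +
        ∑ k ∈ Ico 1 K, #(primesNear m k) / ((k : ℝ) ^ 2 - 1 / 4) := by
  induction K with
  | zero => simp [primesNear]
  | succ K ih =>
    rw [sum_primesNear_succ, ih]
    rcases Nat.eq_zero_or_pos K with rfl | hK
    · norm_num [primesNear]
    have hK1 : (1 : ℝ) ≤ K := by exact_mod_cast hK
    have hstep : (#(primesNear m K) : ℝ) / ((K : ℝ) ^ 2 - 1 / 4) =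
        #(primesNear m K) * (1 / (K - 1 / 2) - 1 / (K + 1 / 2)) := by
      rw [← one_div_sq_sub_quarter hK1, mul_one_div]
    rw [sum_Ico_succ_top hK, hstep]
    push_cast
    rw [show (K + 1 - 1 / 2 : ℝ) = K + 1 / 2 by ring]
    ring

theorem three_mul_card_primesNear_le {m k : ℕ} (hkm : k + 3 ≤ m) :
    3 * #(primesNear m k) ≤ 2 * k + 2 := by
  rw [primesNear, show m + k = m - k + 2 * k by omega]
  exact three_mul_card_primes_Ioc_le (by omega) k

theorem card_primesNear_le_of_nine_le_log {m k : ℕ} (hkm : k ≤ m) (hk : 9 ≤ Real.log (2 * k)) :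
    (#(primesNear m k) : ℝ) ≤
      4 * k / (Real.log (2 * k) - 3 / 2 * √(Real.log (2 * k))) := by
  have h := card_primes_Ioc_le_of_nine_le_log (m - k) (N := 2 * k) (by exact_mod_cast hk)
  rw [show m - k + 2 * k = m + k by omega] at h
  push_cast at h
  rwa [← mul_assoc, show (2 * 2 : ℝ) = 4 by norm_num] at h

theorem tsum_primes_le_sum_primesNear (m : ℕ) {f : ℕ → ℝ} (hf : ∀ p, 0 ≤ f p) :
    (∑' p : ℕ, if p.Prime ∧ (m + 1 / 2 : ℝ) / 2 < p ∧ (p : ℝ) < 3 * (m + 1 / 2) / 2 then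
      f p else 0) ≤ ∑ p ∈ primesNear m ((m + 1) / 2), f p := by
  have hmem : ∀ p : ℕ, p.Prime ∧ (m + 1 / 2 : ℝ) / 2 < p ∧ (p : ℝ) < 3 * (m + 1 / 2) / 2 →
      p ∈ primesNear m ((m + 1) / 2) := by
    rintro p ⟨hprime, hlow, hhigh⟩
    have hlow' : 2 * m + 1 < 4 * p := by exact_mod_cast (by linarith : (2 * m + 1 : ℝ) < 4 * p)
    have hhigh' : 4 * p < 6 * m + 3 := by exact_mod_cast (by linarith : (4 * p : ℝ) < 6 * m + 3)
    exact mem_filter.mpr ⟨mem_Ioc.mpr (by omega), hprime⟩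
  rw [tsum_eq_sum fun p hp => if_neg (mt (hmem p) hp)]
  refine sum_le_sum fun p _ => ?_
  split_ifs
  · exact le_rfl
  · exact hf p

theorem div_sq_sub_quarter_le_log_sub_log {k : ℝ} (hk : 1 < k) :
    k / (k ^ 2 - 1 / 4) ≤ Real.log k - Real.log (k - 1) := by
  have hk1 : 0 < k - 1 := sub_pos.mpr hk
  calc k / (k ^ 2 - 1 / 4)
      ≤ 2 * (1 / (k - 1)) / (1 / (k - 1) + 2) := by
        have hrhs : 2 * (1 / (k - 1)) / (1 / (k - 1) + 2) = 2 / (2 * k - 1) := by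
          rw [show 1 / (k - 1) + 2 = (2 * k - 1) / (k - 1) by field_simp; ring]
          field_simp
        rw [hrhs, div_le_div_iff₀ (by nlinarith) (by linarith)]
        nlinarith
    _ ≤ Real.log (1 + 1 / (k - 1)) := Real.le_log_one_add_of_nonneg (by positivity)
    _ = Real.log k - Real.log (k - 1) := by
        rw [← Real.log_div (by linarith) hk1.ne']
        congr 1
        field_simp
        ring

theorem sum_add_one_div_sq_sub_quarter_le {K : ℕ} (hK : 2 ≤ K) :
    ∑ k ∈ Ico 1 K, (k + 1 : ℝ) / ((k : ℝ) ^ 2 - 1 / 4) ≤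
      Real.log (K - 1) + 10 / 3 - 1 / (K - 1 / 2) := by
  induction K, hK using Nat.le_induction with
  | base => norm_num
  | succ K hK ih =>
    have hK2 : (2 : ℝ) ≤ K := by exact_mod_cast hK
    have hlog := div_sq_sub_quarter_le_log_sub_log (k := K) (by linarith)
    rw [sum_Ico_succ_top (by omega), add_div, one_div_sq_sub_quarter (by linarith)]
    push_cast
    rw [add_sub_cancel_right, show (K + 1 - 1 / 2 : ℝ) = K + 1 / 2 by ring]
    linarith

theorem sub_div_sub_mul_sqrt_le {a b c : ℝ} (hc : 0 ≤ c) (hca : c < √a) (hab : a ≤ b) :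
    (b - a) / (b - c * √b) ≤ 2 * (Real.log (√b - c) - Real.log (√a - c)) := by
  have ha : 0 < a := Real.sqrt_pos.mp (hc.trans_lt hca)
  have hsqrt : √a ≤ √b := Real.sqrt_le_sqrt hab
  have hu : 0 < √a - c := sub_pos.mpr hca
  have hv : 0 < √b - c := by linarith
  have hb : 0 < √b := by linarith
  have ha_sq := Real.sq_sqrt ha.le
  have hb_sq := Real.sq_sqrt (ha.le.trans hab)
  calc (b - a) / (b - c * √b)
      = (√b - √a) * (√b + √a) / (√b * (√b - c)) := by
        congr 1 <;> nlinarith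
    _ ≤ (√b - √a) * (2 * √b) / (√b * (√b - c)) := by
        have := sub_nonneg.mpr hsqrt
        gcongr
        linarith
    _ = 2 * (1 - ((√b - c) / (√a - c))⁻¹) := by
        field_simp
        ring
    _ ≤ 2 * Real.log ((√b - c) / (√a - c)) := by
        gcongr
        exact Real.one_sub_inv_le_log_of_pos (div_pos hv hu)
    _ = 2 * (Real.log (√b - c) - Real.log (√a - c)) := by rw [Real.log_div hv.ne' hu.ne']

theorem card_primesNear_div_le {m k : ℕ} (hkm : k + 3 ≤ m) {c : ℝ} (hc : 0 ≤ c) :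
    #(primesNear m k) / c ≤ 2 / 3 * ((k + 1) / c) := by
  have hcard : (3 * #(primesNear m k) : ℝ) ≤ 2 * k + 2 := by
    exact_mod_cast three_mul_card_primesNear_le hkm
  rw [← mul_div_assoc]
  gcongr
  linarith

theorem sum_card_primesNear_div_le {m K : ℕ} (hK : 2 ≤ K) (hKm : K + 2 ≤ m) :
    ∑ k ∈ Ico 1 K, #(primesNear m k) / ((k : ℝ) ^ 2 - 1 / 4) ≤
      2 / 3 * (Real.log (K - 1) + 10 / 3 - 1 / (K - 1 / 2)) := by
  grw [← sum_add_one_div_sq_sub_quarter_le hK, mul_sum]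
  refine sum_le_sum fun k hk => ?_
  obtain ⟨h1, hkK⟩ := mem_Ico.mp hk
  have h1' : (1 : ℝ) ≤ k := by exact_mod_cast h1
  exact card_primesNear_div_le (by omega) (by nlinarith)

theorem four_mul_div_log_sub_sqrt_log_div_le {k : ℝ} (hk : 1 < k)
    (hlog : 9 / 4 < Real.log (2 * (k - 1))) :
    4 * k / (Real.log (2 * k) - 3 / 2 * √(Real.log (2 * k))) / (k ^ 2 - 1 / 4) ≤
      8 * (Real.log (√(Real.log (2 * k)) - 3 / 2) -
        Real.log (√(Real.log (2 * (k - 1))) - 3 / 2)) := by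
  set a := Real.log (2 * (k - 1)) with ha
  set b := Real.log (2 * k) with hb
  have hab : Real.log k - Real.log (k - 1) = b - a := by
    rw [ha, hb, Real.log_mul two_ne_zero (by linarith), Real.log_mul two_ne_zero (by linarith)]
    ring
  have hle : a ≤ b := Real.log_le_log (by linarith) (by linarith)
  have hsqrt_a : 3 / 2 < √a := Real.lt_sqrt_of_sq_lt (by linarith)
  have hden : 0 ≤ b - 3 / 2 * √b := by
    have hsqrt_b : 3 / 2 < √b := hsqrt_a.trans_le (Real.sqrt_le_sqrt hle)
    nlinarith [Real.sq_sqrt (by linarith : 0 ≤ b)]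
  calc 4 * k / (b - 3 / 2 * √b) / (k ^ 2 - 1 / 4)
      = 4 / (b - 3 / 2 * √b) * (k / (k ^ 2 - 1 / 4)) := by ring
    _ ≤ 4 / (b - 3 / 2 * √b) * (b - a) := by
        grw [div_sq_sub_quarter_le_log_sub_log hk, hab]
    _ = 4 * ((b - a) / (b - 3 / 2 * √b)) := by ring
    _ ≤ 4 * (2 * (Real.log (√b - 3 / 2) - Real.log (√a - 3 / 2))) := by
        grw [sub_div_sub_mul_sqrt_le (by norm_num) hsqrt_a hle]
    _ = 8 * (Real.log (√b - 3 / 2) - Real.log (√a - 3 / 2)) := by ring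

theorem nine_le_log_two_mul {k : ℝ} (hk : 4096 ≤ k) : 9 ≤ Real.log (2 * k) := by
  have hpow : Real.log (2 ^ 13) = 13 * Real.log 2 := by simp
  grw [← hk, show (2 * 4096 : ℝ) = 2 ^ 13 by norm_num, hpow]
  linarith [Real.log_two_gt_d9]

theorem sum_Ico_card_primesNear_div_le {m N K : ℕ} (hN : 4097 ≤ N) (hNK : N ≤ K) (hKm : K ≤ m) :
    ∑ k ∈ Ico N K, #(primesNear m k) / ((k : ℝ) ^ 2 - 1 / 4) ≤
      8 * (Real.log (√(Real.log (2 * (K - 1))) - 3 / 2) -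
        Real.log (√(Real.log (2 * (N - 1))) - 3 / 2)) := by
  induction K, hNK using Nat.le_induction with
  | base => simp
  | succ K hNK ih =>
    have hK : (4097 : ℝ) ≤ K := by exact_mod_cast hN.trans hNK
    have hstep : #(primesNear m K) / ((K : ℝ) ^ 2 - 1 / 4) ≤
        8 * (Real.log (√(Real.log (2 * K)) - 3 / 2) -
          Real.log (√(Real.log (2 * (K - 1))) - 3 / 2)) := by
      have hlog : 9 ≤ Real.log (2 * (K - 1)) := nine_le_log_two_mul (by linarith)
      refine le_trans ?_ (four_mul_div_log_sub_sqrt_log_div_le (by linarith) (by linarith))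
      gcongr
      · nlinarith
      · exact card_primesNear_le_of_nine_le_log (by omega) (nine_le_log_two_mul (by linarith))
    rw [sum_Ico_succ_top hNK]
    push_cast
    rw [add_sub_cancel_right]
    linarith [ih (by omega)]

theorem sum_primesNear_le_of_le {m K : ℕ} (hK : 3 ≤ K) (hK' : K ≤ 4096) (hKm : K + 3 ≤ m) :
    ∑ p ∈ primesNear m K, 1 / |(m + 1 / 2 : ℝ) - p| ≤
      23 / 4 + 4 * Real.log (Real.log (2 * (K - 1))) := by
  have hK3 : (3 : ℝ) ≤ K := by exact_mod_cast hK
  have hK4096 : (K : ℝ) ≤ 4096 := by exact_mod_cast hK'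
  set ℓ := Real.log (2 * (K - 1)) with hℓ
  have hlog_le : Real.log (K - 1) ≤ ℓ := Real.log_le_log (by linarith) (by linarith)
  have hℓ_lower : 1 ≤ ℓ := by
    rw [hℓ, Real.le_log_iff_exp_le (by linarith)]
    linarith [Real.exp_one_lt_d9]
  have hℓ_upper : ℓ ≤ 91 / 10 := by
    have hpow : Real.log (2 ^ 13) = 13 * Real.log 2 := by simp
    have hle : ℓ ≤ Real.log (2 ^ 13) := Real.log_le_log (by linarith) (by linarith)
    linarith [Real.log_two_lt_d9]
  have hboundary : (K + 1) / (K - 1 / 2) - 1 / (K - 1 / 2) ≤ (6 / 5 : ℝ) := by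
    rw [← sub_div, div_le_iff₀ (by linarith)]
    linarith
  have hquadratic : 2 / 3 * (ℓ + 10 / 3 + 6 / 5) ≤ 23 / 4 + 4 * (1 - ℓ⁻¹) := by
    have hinv : ℓ * ℓ⁻¹ = 1 := mul_inv_cancel₀ (by linarith)
    refine le_of_mul_le_mul_left ?_ (by linarith : 0 < ℓ)
    nlinarith
  calc ∑ p ∈ primesNear m K, 1 / |(m + 1 / 2 : ℝ) - p|
      ≤ 2 / 3 * ((K + 1) / (K - 1 / 2)) +
          2 / 3 * (Real.log (K - 1) + 10 / 3 - 1 / (K - 1 / 2)) := by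
        rw [sum_primesNear_eq]
        exact add_le_add (card_primesNear_div_le hKm (by linarith))
          (sum_card_primesNear_div_le (by omega) (by omega))
    _ ≤ 2 / 3 * (ℓ + 10 / 3 + 6 / 5) := by linarith
    _ ≤ 23 / 4 + 4 * (1 - ℓ⁻¹) := hquadratic
    _ ≤ 23 / 4 + 4 * Real.log ℓ := by
        grw [Real.one_sub_inv_le_log_of_pos (by linarith)]

theorem card_primesNear_div_sub_half_le {m K : ℕ} (hK : 4097 ≤ K) (hKm : K ≤ m) :
    #(primesNear m K) / (K - 1 / 2 : ℝ) ≤ 9 / 10 := by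
  have hK' : (4097 : ℝ) ≤ K := by exact_mod_cast hK
  have hlog : 9 ≤ Real.log (2 * K) := nine_le_log_two_mul (by linarith)
  have hden : 9 / 2 ≤ Real.log (2 * K) - 3 / 2 * √(Real.log (2 * K)) := by
    have hsqrt : 3 ≤ √(Real.log (2 * K)) := Real.le_sqrt_of_sq_le (by linarith)
    nlinarith [Real.sq_sqrt (by linarith : 0 ≤ Real.log (2 * K))]
  rw [div_le_iff₀ (by linarith)]
  calc (#(primesNear m K) : ℝ)
      ≤ 4 * K / (Real.log (2 * K) - 3 / 2 * √(Real.log (2 * K))) :=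
        card_primesNear_le_of_nine_le_log hKm hlog
    _ ≤ 4 * K / (9 / 2) := by gcongr
    _ ≤ 9 / 10 * (K - 1 / 2) := by linarith

theorem sum_primesNear_le_of_ge {m K : ℕ} (hK : 4097 ≤ K) (hKm : K + 2 ≤ m) :
    ∑ p ∈ primesNear m K, 1 / |(m + 1 / 2 : ℝ) - p| ≤
      23 / 4 + 4 * Real.log (Real.log (2 * (K - 1))) := by
  have hK' : (4097 : ℝ) ≤ K := by exact_mod_cast hK
  set ℓ := Real.log (2 * (K - 1))
  have hℓ9 : 9 ≤ ℓ := nine_le_log_two_mul (by linarith)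
  have hsqrt : 3 ≤ √ℓ := Real.le_sqrt_of_sq_le (by linarith)
  have hupper : 8 * Real.log (√ℓ - 3 / 2) ≤ 4 * Real.log ℓ := by
    have hle : Real.log (√ℓ - 3 / 2) ≤ Real.log √ℓ := Real.log_le_log (by linarith) (by linarith)
    rw [Real.log_sqrt (by linarith)] at hle
    linarith
  have hlower : 2 / 5 ≤ Real.log (√(Real.log (2 * 4096)) - 3 / 2) := by
    have h9 : 9 ≤ Real.log (2 * 4096) := nine_le_log_two_mul le_rfl
    have h3 : 3 ≤ √(Real.log (2 * 4096)) := Real.le_sqrt_of_sq_le (by linarith)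
    have hhalf := Real.le_log_one_add_of_nonneg (x := 1 / 2) (by norm_num)
    grw [← h3]
    norm_num at hhalf ⊢
    exact hhalf
  have hhead : ∑ k ∈ Ico 1 4097, #(primesNear m k) / ((k : ℝ) ^ 2 - 1 / 4) ≤ 39 / 5 := by
    have hpow : Real.log (2 ^ 12) = 12 * Real.log 2 := by simp
    have h := sum_card_primesNear_div_le (m := m) (K := 4097) (by norm_num) (by omega)
    norm_num at h hpow ⊢
    linarith [Real.log_two_lt_d9]
  have htail := sum_Ico_card_primesNear_div_le (m := m) le_rfl hK (by omega)
  rw [show ((4097 : ℕ) : ℝ) - 1 = 4096 by norm_num] at htail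
  rw [sum_primesNear_eq, ← sum_Ico_consecutive _ (by norm_num) hK]
  linarith [card_primesNear_div_sub_half_le (m := m) hK (by omega)]

theorem log_log_nonneg {x : ℝ} (hx : Real.exp 1 ≤ x) : 0 ≤ Real.log (Real.log x) :=
  Real.log_nonneg ((Real.le_log_iff_exp_le ((Real.exp_pos 1).trans_le hx)).mpr hx)

theorem sum_primesNear_half_le_of_lt_six {m : ℕ} (hm : 3 ≤ m) (hm6 : m < 6) :
    ∑ p ∈ primesNear m ((m + 1) / 2), 1 / |(m + 1 / 2 : ℝ) - p| ≤ 23 / 4 := by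
  have h3 : primesNear 3 ((3 + 1) / 2) = {2, 3, 5} := by decide
  have h4 : primesNear 4 ((4 + 1) / 2) = {3, 5} := by decide
  have h5 : primesNear 5 ((5 + 1) / 2) = {3, 5, 7} := by decide
  interval_cases m
  · rw [h3]
    norm_num [abs_of_pos, abs_of_neg]
  · rw [h4]
    norm_num [abs_of_pos, abs_of_neg]
  · rw [h5]
    norm_num [abs_of_pos, abs_of_neg]

theorem sum_primesNear_half_le {m : ℕ} (hm : 3 ≤ m) :
    ∑ p ∈ primesNear m ((m + 1) / 2), 1 / |(m + 1 / 2 : ℝ) - p| ≤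
      23 / 4 + 4 * Real.log (Real.log (m + 1 / 2)) := by
  have hm' : (3 : ℝ) ≤ m := by exact_mod_cast hm
  rcases lt_or_ge m 6 with hm6 | hm6
  · linarith [sum_primesNear_half_le_of_lt_six hm hm6,
      log_log_nonneg (x := m + 1 / 2) (by linarith [Real.exp_one_lt_d9])]
  set K := (m + 1) / 2
  have hK : (3 : ℝ) ≤ K := by exact_mod_cast (by omega : 3 ≤ (m + 1) / 2)
  have hKm : (2 * K : ℝ) ≤ m + 1 := by exact_mod_cast (by omega : 2 * ((m + 1) / 2) ≤ m + 1)
  calc ∑ p ∈ primesNear m K, 1 / |(m + 1 / 2 : ℝ) - p|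
      ≤ 23 / 4 + 4 * Real.log (Real.log (2 * (K - 1))) := by
        rcases le_or_gt K 4096 with hK' | hK'
        · exact sum_primesNear_le_of_le (by omega) hK' (by omega)
        · exact sum_primesNear_le_of_ge hK' (by omega)
    _ ≤ 23 / 4 + 4 * Real.log (Real.log (m + 1 / 2)) := by
        have hlog : 0 < Real.log (2 * (K - 1)) := Real.log_pos (by linarith)
        gcongr
        · linarith
        · linarith

end

/-- The estimate (3.6): `∑_{x/2 < p < 3x/2} 1/|x-p| ≤ 2C + 4 log log x`. -/
theorem prime_sum_bound (x : ℝ)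
    (hx : ∃ m : ℕ, 0 < m ∧ x = m + 1 / 2) (hx' : 3.5 ≤ x) :
    (∑' p : ℕ, if p.Prime ∧ x / 2 < (p : ℝ) ∧ (p : ℝ) < 3 * x / 2 then
        1 / |x - p| else 0)
    ≤ 2 * ((1284699552 : ℝ) / 444215525) + 4 * Real.log (Real.log x) := by
  obtain ⟨m, -, rfl⟩ := hx
  have hm : 3 ≤ m := by
    norm_num at hx'
    exact_mod_cast (by linarith : (3 : ℝ) ≤ m)
  grw [tsum_primes_le_sum_primesNear m fun p => by positivity, sum_primesNear_half_le hm]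
  gcongr
  norm_num
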